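/- Each of the eight operators S_{i1}, …, S_{i8} is a partial isometry (S S* S = S), and together they satisfy the Choi–Kraus normalization Σ_{k=1}^{8} S_{ik}* S_{ik} = 1, where 1 is the identity operator on H (this is the quantum-channel condition for the Hamiltonian path H₅ of G(Π₃)). -/

import Mathlib

/- Hilbert space `H = ℓ²(ℕ₊, ℂ)` with standard orthonormal basis `(e m)` indexed by the
positive integers `ℕ+`. -/

noncomputable section

open ContinuousLinearMap

/-- The Hilbert space `ℓ²(ℕ₊, ℂ)` of square-summable complex sequences indexed by the
positive integers. -/
abbrev H : Type := lp (fun _ : ℕ+ => ℂ) 2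

/-- The standard orthonormal basis vector `e m` of `H`, for `m ≥ 1`. -/
def e (m : ℕ+) : H := lp.single 2 m 1

/-- `MapsBasis S a b` says that the bounded operator `S` sends the basis vector `e (a n)` to
`e (b n)` for every `n ≥ 1`, and sends to `0` every basis vector not of the form `e (a n)`;
i.e. `S = Σ_{n ≥ 1} E_{b n, a n}` as in the paper. -/
def MapsBasis (S : H →L[ℂ] H) (a b : ℕ+ → ℕ+) : Prop :=
  (∀ n : ℕ+, S (e (a n)) = e (b n)) ∧ ∀ m : ℕ+, (∀ n : ℕ+, m ≠ a n) → S (e m) = 0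

theorem e_coord (x : H) (m : ℕ+) : inner ℂ (e m) x = x m := by
  unfold e
  rw [lp.inner_single_left]
  simp

theorem e_apply (m k : ℕ+) : (e m : H) k = if k = m then 1 else 0 := by
  unfold e
  by_cases h : k = m
  · subst h; simp
  · simp [h]

theorem clm_ext {S T : H →L[ℂ] H} (h : ∀ m, S (e m) = T (e m)) : S = T := by
  ext1 x
  have hx := lp.hasSum_single (p := 2) (by simp) x
  have h1 := hx.mapL S
  have h2 := hx.mapL T
  refine h1.unique ?_
  convert h2 using 2 with m
  have : lp.single 2 m (x m) = (x m) • e m := by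
    unfold e
    rw [← lp.single_smul]; simp
  rw [this, map_smul, map_smul, h]

theorem adj_apply {S : H →L[ℂ] H} {a b : ℕ+ → ℕ+} (h : MapsBasis S a b)
    (ha : Function.Injective a) (hb : Function.Injective b) (n : ℕ+) :
    adjoint S (e (b n)) = e (a n) := by
  apply lp.ext
  funext m
  rw [← e_coord, adjoint_inner_right, e_apply]
  by_cases hm : ∃ k, m = a k
  · obtain ⟨k, rfl⟩ := hm
    rw [h.1, e_coord, e_apply]
    simp [ha.eq_iff, hb.eq_iff]
  · push Not at hm
    rw [h.2 m hm, inner_zero_left, if_neg (hm n)]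

theorem star_self_mem {S : H →L[ℂ] H} {a b : ℕ+ → ℕ+} (h : MapsBasis S a b)
    (ha : Function.Injective a) (hb : Function.Injective b) (n : ℕ+) :
    adjoint S (S (e (a n))) = e (a n) := by
  rw [h.1, adj_apply h ha hb]

theorem partial_isom {S : H →L[ℂ] H} {a b : ℕ+ → ℕ+} (h : MapsBasis S a b)
    (ha : Function.Injective a) (hb : Function.Injective b) :
    S ∘L adjoint S ∘L S = S := by
  apply clm_ext
  intro m
  simp only [comp_apply]
  by_cases hm : ∃ k, m = a k
  · obtain ⟨k, rfl⟩ := hm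
    rw [star_self_mem h ha hb]
  · push Not at hm
    simp [h.2 m hm]

theorem pnat_sub_val (c d n : ℕ+) (h : d < c) : ((c * n - d : ℕ+) : ℕ) = c * n - d := by
  have h0 : (d : ℕ) < c := h
  have h1 : d < c * n := by
    rw [← PNat.coe_lt_coe, PNat.mul_coe]
    nlinarith [n.pos]
  rw [PNat.sub_coe, if_pos h1, PNat.mul_coe]

theorem inj_sub (c d : ℕ+) (h : d < c) : Function.Injective (fun n : ℕ+ => c * n - d) := by
  intro n m hnm
  have h0 : (d : ℕ) < c := h
  have h2 := congrArg PNat.val hnm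
  change ((c * n - d : ℕ+) : ℕ) = ((c * m - d : ℕ+) : ℕ) at h2
  rw [pnat_sub_val c d n h, pnat_sub_val c d m h] at h2
  have h3 : (d : ℕ) < c * n := by nlinarith [n.pos]
  have h4 : (d : ℕ) < c * m := by nlinarith [m.pos]
  have h5 : (c : ℕ) * n = c * m := by omega
  exact PNat.eq (Nat.eq_of_mul_eq_mul_left c.pos h5)

/-- `S* S` acts on `e m` as the indicator of the residue class `-d` modulo 8. -/
theorem star_self_sub {S : H →L[ℂ] H} {b : ℕ+ → ℕ+} (d : ℕ+) (hd : d < 8)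
    (h : MapsBasis S (fun n => 8 * n - d) b) (hb : Function.Injective b) (m : ℕ+) :
    adjoint S (S (e m)) = if ((m : ℕ) + d) % 8 = 0 then e m else 0 := by
  have hd' : (d : ℕ) < 8 := hd
  split_ifs with hm
  · have hp := d.pos
    have hm' : m = 8 * (Nat.toPNat (((m : ℕ) + d) / 8) (by omega)) - d := by
      apply PNat.eq
      rw [pnat_sub_val 8 d _ hd]
      change (m : ℕ) = 8 * (((m : ℕ) + d) / 8) - d
      omega
    have := star_self_mem h (inj_sub 8 d hd) hb (Nat.toPNat (((m : ℕ) + d) / 8) (by omega))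
    beta_reduce at this
    rwa [← hm'] at this
  · rw [h.2 m, map_zero]
    intro n hn
    apply hm
    have h1 := n.pos
    have h2 : (m : ℕ) = 8 * n - d := by rw [hn]; exact pnat_sub_val 8 d n hd
    omega

theorem star_self_zero {S : H →L[ℂ] H} {b : ℕ+ → ℕ+}
    (h : MapsBasis S (fun n => 8 * n) b) (hb : Function.Injective b) (m : ℕ+) :
    adjoint S (S (e m)) = if (m : ℕ) % 8 = 0 then e m else 0 := by
  split_ifs with hm
  · have hp := m.pos
    have hm' : m = 8 * (Nat.toPNat ((m : ℕ) / 8) (by omega)) := by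
      apply PNat.eq
      change (m : ℕ) = 8 * ((m : ℕ) / 8)
      omega
    have := star_self_mem h (mul_right_injective 8) hb (Nat.toPNat ((m : ℕ) / 8) (by omega))
    beta_reduce at this
    rwa [← hm'] at this
  · rw [h.2 m, map_zero]
    intro n hn
    apply hm
    have h2 : (m : ℕ) = 8 * n := by rw [hn]; rfl
    omega

/-- Each of `S_{i1}, …, S_{i8}` is a partial isometry and `Σₖ S_{ik}* S_{ik} = 1` (the quantum-channel condition for the Hamiltonian path `H₅` of `G(Π₃)`). -/
theorem stmt_13
    (Si1 Si2 Si3 Si4 Si5 Si6 Si7 Si8 : H →L[ℂ] H)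
    (hSi1 : MapsBasis Si1 (fun n => 8 * n - 2) (fun n => 32 * n - 7))
    (hSi2 : MapsBasis Si2 (fun n => 8 * n - 3) (fun n => 48 * n - 42))
    (hSi3 : MapsBasis Si3 (fun n => 8 * n - 1) (fun n => 48 * n - 27))
    (hSi4 : MapsBasis Si4 (fun n => 8 * n) (fun n => 40 * n - 25))
    (hSi5 : MapsBasis Si5 (fun n => 8 * n - 4) (fun n => 40 * n - 8))
    (hSi6 : MapsBasis Si6 (fun n => 8 * n - 5) (fun n => 32 * n - 28))
    (hSi7 : MapsBasis Si7 (fun n => 8 * n - 6) (fun n => 24 * n - 21))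
    (hSi8 : MapsBasis Si8 (fun n => 8 * n - 7) (fun n => 24 * n - 22)) :
    (Si1 ∘L adjoint Si1 ∘L Si1 = Si1 ∧
    Si2 ∘L adjoint Si2 ∘L Si2 = Si2 ∧
    Si3 ∘L adjoint Si3 ∘L Si3 = Si3 ∧
    Si4 ∘L adjoint Si4 ∘L Si4 = Si4 ∧
    Si5 ∘L adjoint Si5 ∘L Si5 = Si5 ∧
    Si6 ∘L adjoint Si6 ∘L Si6 = Si6 ∧
    Si7 ∘L adjoint Si7 ∘L Si7 = Si7 ∧
    Si8 ∘L adjoint Si8 ∘L Si8 = Si8) ∧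
    adjoint Si1 ∘L Si1 + adjoint Si2 ∘L Si2 + adjoint Si3 ∘L Si3 + adjoint Si4 ∘L Si4 + adjoint Si5 ∘L Si5 + adjoint Si6 ∘L Si6 + adjoint Si7 ∘L Si7 + adjoint Si8 ∘L Si8 = 1 := by
  have b1 := inj_sub 32 7 (by decide)
  have b2 := inj_sub 48 42 (by decide)
  have b3 := inj_sub 48 27 (by decide)
  have b4 := inj_sub 40 25 (by decide)
  have b5 := inj_sub 40 8 (by decide)
  have b6 := inj_sub 32 28 (by decide)
  have b7 := inj_sub 24 21 (by decide)
  have b8 := inj_sub 24 22 (by decide)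
  refine ⟨⟨partial_isom hSi1 (inj_sub 8 2 (by decide)) b1,
    partial_isom hSi2 (inj_sub 8 3 (by decide)) b2,
    partial_isom hSi3 (inj_sub 8 1 (by decide)) b3,
    partial_isom hSi4 (mul_right_injective 8) b4,
    partial_isom hSi5 (inj_sub 8 4 (by decide)) b5,
    partial_isom hSi6 (inj_sub 8 5 (by decide)) b6,
    partial_isom hSi7 (inj_sub 8 6 (by decide)) b7,
    partial_isom hSi8 (inj_sub 8 7 (by decide)) b8⟩, ?_⟩
  apply clm_ext
  intro m
  simp only [add_apply, comp_apply, one_apply_eq_self]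
  rw [star_self_sub 2 (by decide) hSi1 b1, star_self_sub 3 (by decide) hSi2 b2,
    star_self_sub 1 (by decide) hSi3 b3, star_self_zero hSi4 b4,
    star_self_sub 4 (by decide) hSi5 b5, star_self_sub 5 (by decide) hSi6 b6,
    star_self_sub 6 (by decide) hSi7 b7, star_self_sub 7 (by decide) hSi8 b8]
  have h8 : (m : ℕ) % 8 < 8 := Nat.mod_lt _ (by decide)
  simp only [Nat.add_mod (m : ℕ), PNat.val_ofNat]
  generalize (m : ℕ) % 8 = r at h8
  interval_cases r <;> simp
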